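/- arXiv:2104.06501 — 5 statements merged into one kernel-verified Lean document; each statement's English description precedes it below -/
import Mathlib

section
/- Let F be a field, let h be a positive integer, and let φ = c₁x₁ + ⋯ + c_hx_h be an h-ary linear form with all coefficients cᵢ ∈ F nonzero. Let A be a subset of F with |A| ≥ 2, let a₀, a₁ ∈ A with a₀ ≠ a₁, and let A′ = {(a − a₀)/(a₁ − a₀) : a ∈ A}. Then A is a φ-Sidon set if and only if A′ is a φ-Sidon set. -/
/-- The form commutes with the affine map `x ↦ (x - u) / d`, up to a constant. -/
theorem form_affine {F : Type*} [Field F] {h : ℕ} (c b : Fin h → F) (u d : F) :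
    ∑ i, c i * ((b i - u) / d) = (∑ i, c i * b i - ∑ i, c i * u) / d := by
  rw [← Finset.sum_sub_distrib, Finset.sum_div]
  exact Finset.sum_congr rfl fun i _ => by ring

/-- Let `A ⊆ F` with `|A| ≥ 2`, let `a₀ ≠ a₁` in `A`, and let
`A′ = {(a − a₀)/(a₁ − a₀) : a ∈ A}`. Then `A` is a Sidon set for the linear form
`φ = c₁x₁ + ⋯ + c_hx_h` (all `cᵢ ≠ 0`) if and only if `A′` is. -/
theorem sidon_iff_sidon_normalized
    (F : Type*) [Field F] (h : ℕ) (hh : 0 < h) (c : Fin h → F) (hc : ∀ i, c i ≠ 0)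
    (A : Set F) (hcard : 2 ≤ A.ncard)
    (a₀ a₁ : F) (ha₀ : a₀ ∈ A) (ha₁ : a₁ ∈ A) (hne : a₀ ≠ a₁)
    (A' : Set F) (hA' : A' = (fun a => (a - a₀) / (a₁ - a₀)) '' A) :
    (∀ a a' : Fin h → F, (∀ i, a i ∈ A) → (∀ i, a' i ∈ A) →
        ∑ i, c i * a i = ∑ i, c i * a' i → a = a') ↔
      (∀ a a' : Fin h → F, (∀ i, a i ∈ A') → (∀ i, a' i ∈ A') →
        ∑ i, c i * a i = ∑ i, c i * a' i → a = a') := by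
  subst hA'
  have hd : a₁ - a₀ ≠ 0 := sub_ne_zero.mpr hne.symm
  constructor
  · intro H a a' ha ha' heq
    choose b hb hba using ha
    choose b' hb' hba' using ha'
    obtain rfl : (fun i => (b i - a₀) / (a₁ - a₀)) = a := funext hba
    obtain rfl : (fun i => (b' i - a₀) / (a₁ - a₀)) = a' := funext hba'
    simp only [form_affine] at heq
    rw [div_left_inj' hd, sub_left_inj] at heq
    rw [H b b' hb hb' heq]
  · intro H a a' ha ha' heq
    have key := H (fun i => (a i - a₀) / (a₁ - a₀)) (fun i => (a' i - a₀) / (a₁ - a₀))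
      (fun i => ⟨a i, ha i, rfl⟩) (fun i => ⟨a' i, ha' i, rfl⟩)
      (by simp only [form_affine, heq])
    funext i
    have hi := congrFun key i
    rwa [div_left_inj' hd, sub_left_inj] at hi
end

section
/- Every nonempty finite subset A of a field F is a Sidon set for the binary form x₁ + cx₂ for all but finitely many c ∈ F \ {0}; that is, the exceptional set E(A) = {c ∈ F \ {0} : A is not a Sidon set for x₁ + cx₂} is finite. -/
/-- For every nonempty finite subset `A` of a field `F`, the exceptional set
`E(A) = {c ∈ F \ {0} : A is not a Sidon set for x₁ + cx₂}` is finite. -/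
theorem exceptional_set_finite
    (F : Type*) [Field F] (A : Set F) (hA : A.Nonempty) (hfin : A.Finite) :
    {c : F | c ≠ 0 ∧ ¬ (∀ a₁ ∈ A, ∀ a₂ ∈ A, ∀ a₁' ∈ A, ∀ a₂' ∈ A,
      a₁ + c * a₂ = a₁' + c * a₂' → a₁ = a₁' ∧ a₂ = a₂')}.Finite := by
  refine ((((hfin.prod hfin).prod (hfin.prod hfin)).image
    (fun p : (F × F) × (F × F) => (p.1.1 - p.1.2) / (p.2.1 - p.2.2)))).subset ?_
  rintro c ⟨hc, h⟩
  push Not at h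
  obtain ⟨a, ha, b, hb, a', ha', b', hb', heq, hne⟩ := h
  refine ⟨((a', a), (b, b')), ⟨⟨ha', ha⟩, ⟨hb, hb'⟩⟩, ?_⟩
  have hbb : b - b' ≠ 0 := by
    intro h0
    have h1 : b = b' := sub_eq_zero.mp h0
    subst h1
    exact hne (add_right_cancel heq) rfl
  change (a' - a) / (b - b') = c
  rw [div_eq_iff hbb]
  linear_combination -heq
end

section
/- Let A be a nonempty subset of a field F and let c ∈ F \ {0}. Then A is a Sidon set for the binary form x₁ + cx₂ if and only if A is a Sidon set for the binary form x₁ + (1/c)x₂. -/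
/-- A nonempty subset `A` of a field is a Sidon set for the binary form
`x₁ + cx₂` (with `c ≠ 0`) if and only if it is a Sidon set for `x₁ + (1/c)x₂`. -/
theorem sidon_iff_sidon_inv
    (F : Type*) [Field F] (A : Set F) (hA : A.Nonempty) (c : F) (hc : c ≠ 0) :
    (∀ a₁ ∈ A, ∀ a₂ ∈ A, ∀ a₁' ∈ A, ∀ a₂' ∈ A,
        a₁ + c * a₂ = a₁' + c * a₂' → a₁ = a₁' ∧ a₂ = a₂') ↔
      (∀ a₁ ∈ A, ∀ a₂ ∈ A, ∀ a₁' ∈ A, ∀ a₂' ∈ A,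
        a₁ + c⁻¹ * a₂ = a₁' + c⁻¹ * a₂' → a₁ = a₁' ∧ a₂ = a₂') := by
  constructor
  · intro h a ha b hb a' ha' b' hb' e
    refine (h b hb a ha b' hb' a' ha' ?_).symm
    have e2 := congrArg (fun x => c * x) e
    simp only [mul_add, mul_inv_cancel_left₀ hc] at e2
    linear_combination e2
  · intro h a ha b hb a' ha' b' hb' e
    refine (h b hb a ha b' hb' a' ha' ?_).symm
    have e2 := congrArg (fun x => c⁻¹ * x) e
    simp only [mul_add, inv_mul_cancel_left₀ hc] at e2
    linear_combination e2
end

section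
/- Let A be a nonempty subset of a field F and let c ∈ F \ {0}. If c ∈ E(A), then E(c) = {c, −c, 1/c, −1/c} ⊆ E(A); equivalently, A is a Sidon set for one of the binary forms x₁ + cx₂, x₁ − cx₂, x₁ + (1/c)x₂, x₁ − (1/c)x₂ if and only if A is a Sidon set for all four of them. -/
/-- The exceptional set `E(A)`: the set of nonzero `c` such that `A` is not a Sidon set for
the binary linear form `x₁ + cx₂`. -/
def sidonExceptionalSet {F : Type*} [Field F] (A : Set F) : Set F :=
  {c : F | c ≠ 0 ∧ ¬ (∀ a₁ ∈ A, ∀ a₂ ∈ A, ∀ a₁' ∈ A, ∀ a₂' ∈ A,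
    a₁ + c * a₂ = a₁' + c * a₂' → a₁ = a₁' ∧ a₂ = a₂')}

theorem exc_neg {F : Type*} [Field F] {A : Set F} {c : F}
    (h : c ∈ sidonExceptionalSet A) : -c ∈ sidonExceptionalSet A := by
  refine ⟨neg_ne_zero.mpr h.1, fun H => h.2 ?_⟩
  intro a ha b hb a' ha' b' hb' e
  obtain ⟨h1, h2⟩ := H a ha b' hb' a' ha' b hb (by linear_combination e)
  exact ⟨h1, h2.symm⟩

theorem exc_inv {F : Type*} [Field F] {A : Set F} {c : F}
    (h : c ∈ sidonExceptionalSet A) : c⁻¹ ∈ sidonExceptionalSet A := by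
  refine ⟨inv_ne_zero h.1, fun H => h.2 ?_⟩
  intro a ha b hb a' ha' b' hb' e
  have hc : c⁻¹ * c = 1 := inv_mul_cancel₀ h.1
  obtain ⟨h1, h2⟩ := H b hb a ha b' hb' a' ha'
    (by linear_combination c⁻¹ * e - (b - b') * hc)
  exact ⟨h2, h1⟩

/-- If `c ∈ E(A)` (with `c ≠ 0` and `A` nonempty), then
`E(c) = {c, −c, 1/c, −1/c} ⊆ E(A)`. -/
theorem exceptional_closed_under_neg_inv
    (F : Type*) [Field F] (A : Set F) (hA : A.Nonempty) (c : F) (hc : c ≠ 0)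
    (hcE : c ∈ sidonExceptionalSet A) :
    ({c, -c, c⁻¹, -c⁻¹} : Set F) ⊆ sidonExceptionalSet A := by
  rintro x (rfl | rfl | rfl | rfl)
  · exact hcE
  · exact exc_neg hcE
  · exact exc_inv hcE
  · exact exc_neg (exc_inv hcE)
end

section
/- Let F be a field and let A = {0, 1, a} ⊆ F with a ≠ 0 and a ≠ 1. Then E(A) = E(1) ∪ E(a) ∪ E(a−1) ∪ E((a−1)/a), where E(c) = {c, −c, 1/c, −1/c}; that is, for c ∈ F \ {0}, the set {0, 1, a} fails to be a Sidon set for the binary form x₁ + cx₂ if and only if c ∈ {±1, ±a, ±1/a, ±(a−1), ±1/(a−1), ±(a−1)/a, ±a/(a−1)}. -/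
/-- `E(c) = {c, −c, 1/c, −1/c}` for a nonzero field element `c`. -/
def quadE {F : Type*} [Field F] (c : F) : Set F := {c, -c, c⁻¹, -c⁻¹}

/-- Nonzero differences of `{0, 1, a}`, up to sign. -/
lemma diff_cases {F : Type*} [Field F] {a x y : F} (hx : x ∈ ({0, 1, a} : Set F))
    (hy : y ∈ ({0, 1, a} : Set F)) (hxy : x ≠ y) :
    ∃ d, (d = 1 ∨ d = a ∨ d = a - 1) ∧ (x - y = d ∨ x - y = -d) := by
  simp only [Set.mem_insert_iff, Set.mem_singleton_iff] at hx hy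
  rcases hx with rfl | rfl | rfl <;> rcases hy with rfl | rfl | rfl <;> simp_all

/-- A ratio of differences lies in the exceptional set. -/
lemma mem_of_ratio {F : Type*} [Field F] {A : Set F} {c x y z w : F} (hc : c ≠ 0)
    (hx : x ∈ A) (hy : y ∈ A) (hz : z ∈ A) (hw : w ∈ A) (hxy : x ≠ y)
    (h : c * (x - y) = z - w ∨ c * (x - y) = -(z - w)) : c ∈ sidonExceptionalSet A := by
  refine ⟨hc, fun H => hxy ?_⟩
  rcases h with h | h
  · exact (H w hw x hx z hz y hy (by linear_combination h)).2
  · exact (H z hz x hx w hw y hy (by linear_combination h)).2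

/-- Membership in `quadE` through equations without division. -/
lemma mem_quadE_div {F : Type*} [Field F] {c p q : F} (hp : p ≠ 0) (hq : q ≠ 0) :
    c ∈ quadE (p / q) ↔ (c * q = p ∨ c * q = -p) ∨ (c * p = q ∨ c * p = -q) := by
  simp only [quadE, Set.mem_insert_iff, Set.mem_singleton_iff, inv_div, ← neg_div,
    eq_div_iff hp, eq_div_iff hq]
  tauto

/-- For `A = {0, 1, a}` with `a ≠ 0`, `a ≠ 1`,
`E(A) = E(1) ∪ E(a) ∪ E(a−1) ∪ E((a−1)/a)`. -/
theorem exceptional_set_three_element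
    (F : Type*) [Field F] (a : F) (ha0 : a ≠ 0) (ha1 : a ≠ 1) :
    sidonExceptionalSet ({0, 1, a} : Set F) =
      quadE (1 : F) ∪ quadE a ∪ quadE (a - 1) ∪ quadE ((a - 1) / a) := by
  have hb : a - 1 ≠ 0 := sub_ne_zero.2 ha1
  have e1 : quadE (1 : F) = quadE ((1 : F) / 1) := by rw [div_one]
  have e2 : quadE a = quadE (a / 1) := by rw [div_one]
  have e3 : quadE (a - 1) = quadE ((a - 1) / 1) := by rw [div_one]
  have m0 : (0 : F) ∈ ({0, 1, a} : Set F) := by simp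
  have m1 : (1 : F) ∈ ({0, 1, a} : Set F) := by simp
  have ma : a ∈ ({0, 1, a} : Set F) := by simp
  ext c
  rw [e1, e2, e3]
  simp only [Set.mem_union, mem_quadE_div, one_ne_zero, ha0, hb, ne_eq, not_false_eq_true]
  constructor
  · rintro ⟨hc, H⟩
    push Not at H
    obtain ⟨x, hx, y, hy, z, hz, w, hw, h, hne⟩ := H
    have hyw : y ≠ w := by
      rintro rfl
      exact hne (by linear_combination h) rfl
    have hzx : z ≠ x := by
      rintro rfl
      have : c * (y - w) = 0 := by linear_combination h
      rcases mul_eq_zero.1 this with h' | h'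
      · exact hc h'
      · exact hyw (sub_eq_zero.1 h')
    obtain ⟨d, hd, hd'⟩ := diff_cases hy hw hyw
    obtain ⟨e, he, he'⟩ := diff_cases hz hx hzx
    have hr : c * (y - w) = z - x := by linear_combination h
    have key : c * d = e ∨ c * d = -e := by
      rcases hd' with h1 | h1 <;> rcases he' with h2 | h2 <;> rw [h1, h2] at hr
      · exact Or.inl hr
      · exact Or.inr hr
      · exact Or.inr (by linear_combination -hr)
      · exact Or.inl (by linear_combination -hr)
    clear hr hd' he' h hne
    have hcc : ∀ t : F, t ≠ 0 → (c * t = t ∨ c * t = -t) → (c * 1 = 1 ∨ c * 1 = -1) := by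
      rintro t ht (h | h)
      · exact Or.inl (mul_right_cancel₀ ht (by linear_combination h))
      · exact Or.inr (mul_right_cancel₀ ht (by linear_combination h))
    have ka := hcc a ha0
    have kb := hcc (a - 1) hb
    rcases hd with rfl | rfl | rfl <;> rcases he with rfl | rfl | rfl
    · exact Or.inl (Or.inl (Or.inl (Or.inl key)))
    · exact Or.inl (Or.inl (Or.inr (Or.inl key)))
    · exact Or.inl (Or.inr (Or.inl key))
    · exact Or.inl (Or.inl (Or.inr (Or.inr key)))
    · exact Or.inl (Or.inl (Or.inl (Or.inl (ka key))))
    · exact Or.inr (Or.inl key)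
    · exact Or.inl (Or.inr (Or.inr key))
    · exact Or.inr (Or.inr key)
    · exact Or.inl (Or.inl (Or.inl (Or.inl (kb key))))
  · have hc : ∀ p q : F, q ≠ 0 → (c * p = q ∨ c * p = -q) → c ≠ 0 := by
      rintro p q hq h rfl
      simp [eq_comm, hq] at h
    have h01 : (1 : F) ≠ 0 := one_ne_zero
    have key : ∀ x y z w : F, x ∈ ({0, 1, a} : Set F) → y ∈ ({0, 1, a} : Set F) →
        z ∈ ({0, 1, a} : Set F) → w ∈ ({0, 1, a} : Set F) → x ≠ y → z ≠ w →
        (c * (x - y) = z - w ∨ c * (x - y) = -(z - w)) →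
        c ∈ sidonExceptionalSet ({0, 1, a} : Set F) :=
      fun x y z w hx hy hz hw hxy hzw h =>
        mem_of_ratio (hc _ _ (sub_ne_zero.2 hzw) h) hx hy hz hw hxy h
    rintro ((((h | h) | (h | h)) | (h | h)) | (h | h))
    · exact key 1 0 1 0 m1 m0 m1 m0 h01 h01 (by simpa only [sub_zero] using h)
    · exact key 1 0 1 0 m1 m0 m1 m0 h01 h01 (by simpa only [sub_zero] using h)
    · exact key 1 0 a 0 m1 m0 ma m0 h01 ha0 (by simpa only [sub_zero] using h)
    · exact key a 0 1 0 ma m0 m1 m0 ha0 h01 (by simpa only [sub_zero] using h)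
    · exact key 1 0 a 1 m1 m0 ma m1 h01 ha1 (by simpa only [sub_zero] using h)
    · exact key a 1 1 0 ma m1 m1 m0 ha1 h01 (by simpa only [sub_zero] using h)
    · exact key a 0 a 1 ma m0 ma m1 ha0 ha1 (by simpa only [sub_zero] using h)
    · exact key a 1 a 0 ma m1 ma m0 ha1 ha0 (by simpa only [sub_zero] using h)
end
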